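/- arXiv:math/0002135 — 2 statements merged into one kernel-verified Lean document; each statement's English description precedes it below -/
import Mathlib

section
/- Let m ∈ ℤ and let z, z' be real numbers with m < z < m+1 and m < z' < m+1 (complementary series). Then for every n ∈ ℕ and every partition λ of n, the z-measure value M_n(λ) = (n!/(zz')_n) Π_{□∈λ}(z+c(□))(z'+c(□))/h(□)² is a strictly positive real number, and Σ_{|λ|=n} M_n(λ) = 1. -/
open scoped Classical

noncomputable section

/-- The content of a cell `c = (i, j)` (0-indexed row `i` and column `j`) of a Young diagram:
`c(□) = column(□) - row(□)`. -/
def cellContent (c : ℕ × ℕ) : ℤ := (c.2 : ℤ) - (c.1 : ℤ)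

/-- The hook length of the cell `c = (i, j)` of the Young diagram `Y`:
`h(□) = λ_i - j + λ'_j - i - 1` in 0-indexed coordinates. -/
def hookLen (Y : YoungDiagram) (c : ℕ × ℕ) : ℕ :=
  (Y.rowLen c.1 - c.2) + (Y.colLen c.2 - c.1) - 1

/-- The product `Π_{□ ∈ λ} (z + c(□)) (z' + c(□)) / h(□)²`. -/
def zWeight (z z' : ℂ) (Y : YoungDiagram) : ℂ :=
  ∏ c ∈ Y.cells, ((z + cellContent c) * (z' + cellContent c) / (hookLen Y c : ℂ) ^ 2)

/-- The finset of squares addable to the Young diagram `Y`: cells `c ∉ Y` such that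
adding `c` to `Y` again yields a Young diagram, i.e. every strictly smaller cell
(in the product order) already belongs to `Y`.  Any such cell has the form
`(i, Y.rowLen i)` for some `i ≤ Y.colLen 0`. -/
def addables (Y : YoungDiagram) : Finset (ℕ × ℕ) :=
  ((Finset.range (Y.colLen 0 + 1)).image fun i => (i, Y.rowLen i)).filter
    fun c => ∀ d : ℕ × ℕ, d ≤ c → d ≠ c → d ∈ Y.cells

/-- Add a square to a Young diagram (when the result is again a Young diagram;
junk value `Y` otherwise). -/
def addBox (Y : YoungDiagram) (c : ℕ × ℕ) : YoungDiagram :=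
  if h : c ∉ Y.cells ∧ ∀ d : ℕ × ℕ, d ≤ c → d ≠ c → d ∈ Y.cells then
    { cells := insert c Y.cells,
      isLowerSet := by
        intro a b hba ha
        simp only [Finset.coe_insert, Set.mem_insert_iff, Finset.mem_coe] at ha ⊢
        rcases ha with rfl | ha
        · by_cases hbc : b = a
          · exact Or.inl hbc
          · exact Or.inr (h.2 b hba hbc)
        · exact Or.inr (Y.isLowerSet hba ha) }
  else Y

/-- The finset of squares removable from the Young diagram `Y`: the corners of `Y`. -/
def removables (Y : YoungDiagram) : Finset (ℕ × ℕ) :=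
  Y.cells.filter fun c => (c.1 + 1, c.2) ∉ Y.cells ∧ (c.1, c.2 + 1) ∉ Y.cells

/-- Remove a square from a Young diagram (when the result is again a Young diagram;
junk value `Y` otherwise). -/
def removeBox (Y : YoungDiagram) (c : ℕ × ℕ) : YoungDiagram :=
  if h : (c.1 + 1, c.2) ∉ Y.cells ∧ (c.1, c.2 + 1) ∉ Y.cells then
    { cells := Y.cells.erase c,
      isLowerSet := by
        intro a b hba ha
        rw [Finset.coe_erase, Set.mem_diff] at ha ⊢
        refine ⟨Y.isLowerSet hba ha.1, ?_⟩
        rintro rfl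
        rcases lt_or_eq_of_le hba with hlt | rfl
        · rcases Prod.lt_iff.mp hlt with ⟨h1, h2⟩ | ⟨h1, h2⟩
          · exact h.1 (Y.isLowerSet (Prod.mk_le_mk.mpr ⟨h1, h2⟩) ha.1)
          · exact h.2 (Y.isLowerSet (Prod.mk_le_mk.mpr ⟨h1, h2⟩) ha.1)
        · exact ha.2 rfl }
  else Y


/-- The real-valued product `Π_{□ ∈ λ} (z + c(□)) (z' + c(□)) / h(□)²` for real `z, z'`. -/
def zWeightR (z z' : ℝ) (Y : YoungDiagram) : ℝ :=
  ∏ c ∈ Y.cells, ((z + cellContent c) * (z' + cellContent c) / (hookLen Y c : ℝ) ^ 2)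

/-!
A partition with at most `N` parts is a configuration of `N` beads `x₀ < ⋯ < x_{N-1}` on `ℕ`, and
adding a box moves one bead by one step. By Frobenius' formula the inverse hook product is
`V(x) / ∏ x_i!` with `V` the Vandermonde determinant, and the product of `(z + c) (z' + c)` over
the boxes gains the factor `(z + 1 - N + x_i) (z' + 1 - N + x_i)` when bead `i` moves.

In the basis of polynomials `(X + c) (X + c + h) ⋯`, the map `p ↦ (X + c) * (p (X + h) - p)` is
diagonal, so expanding determinants by its trace gives
`∑ᵢ (x_i + c) V(x + h eᵢ) = (∑ᵢ (x_i + c) + h N (N - 1) / 2) V(x)`.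
This evaluates both sums obtained by counting the pairs of diagrams that differ by one box, once
from the larger and once from the smaller diagram: if `S n` is the total weight of the partitions
of `n`, then `(n + 1) * S (n + 1) = (z * z' + n) * S n`, whence `n! * S n = (z * z')_n`.
Positivity holds because no integer separates `-z` from `-z'`.
-/

section Vandermonde

open Finset Matrix Polynomial

theorem sum_det_updateRow_mul {n R : Type*} [Fintype n] [DecidableEq n] [CommRing R]
    (M B : Matrix n n R) :
    ∑ i, (M.updateRow i ((M * B) i)).det = B.trace * M.det := by
  have hrow (i : n) : (M.updateRow i ((M * B) i)).det = (M * B * M.adjugate) i i := by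
    rw [← cramer_transpose_apply, cramer_eq_adjugate_mulVec, ← adjugate_transpose,
      mulVec_transpose, mul_apply_eq_vecMul (M * B)]
  calc ∑ i, (M.updateRow i ((M * B) i)).det
    _ = (M * B * M.adjugate).trace := sum_congr rfl fun i _ => hrow i
    _ = (B * (M.adjugate * M)).trace := by rw [mul_assoc, trace_mul_comm, mul_assoc]
    _ = B.trace * M.det := by
      rw [adjugate_mul, Matrix.mul_smul, mul_one, trace_smul, smul_eq_mul, mul_comm]

theorem prod_add_single_of_mul {ι α M : Type*} [Fintype ι] [DecidableEq ι] [AddZeroClass α]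
    [CommMonoid M] (f : ι → α → M) (x : ι → α) (i : ι) {h : α} {r : M}
    (hr : f i (x i + h) = f i (x i) * r) :
    ∏ j, f j ((x + Pi.single i h : ι → α) j) = (∏ j, f j (x j)) * r := by
  rw [← mul_prod_erase _ _ (mem_univ i), ← mul_prod_erase _ (fun j => f j (x j)) (mem_univ i),
    Pi.add_apply, Pi.single_eq_same, hr, mul_right_comm]
  congr 2
  refine prod_congr rfl fun j hj => ?_
  rw [Pi.add_apply, Pi.single_eq_of_ne (ne_of_mem_erase hj), add_zero]

theorem mul_prod_range_add_shift {R : Type*} [CommRing R] (t c h : R) (k : ℕ) :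
    (t + c) * ∏ j ∈ range k, (t + h + (c + h * j)) =
      (∏ j ∈ range k, (t + (c + h * j))) * (t + (c + h * k)) := by
  rw [← prod_range_succ fun j : ℕ => t + (c + h * j), prod_range_succ', mul_comm]
  congr 1
  · exact prod_congr rfl fun j _ => by push_cast; ring
  · rw [Nat.cast_zero, mul_zero, add_zero]

variable {N : ℕ}

theorem sum_mul_det_vandermonde_add_single {R : Type*} [CommRing R]
    (x : Fin N → R) (c h : R) :
    ∑ i, (x i + c) * (vandermonde (x + Pi.single i h)).det =
      (∑ i, (x i + c) + h * N.choose 2) * (vandermonde x).det := by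
  nontriviality R
  let p (k : Fin N) : R[X] := Lagrange.nodal (range k) fun j => -(c + h * j)
  have hdet (y : Fin N → R) :
      (vandermonde y).det = (of fun i k => (p k).eval (y i) : Matrix (Fin N) (Fin N) R).det :=
    det_eval_matrixOfPolynomials_eq_det_vandermonde y p
      (fun k => by rw [Lagrange.natDegree_nodal, card_range]) fun _ => Lagrange.nodal_monic
  have hp (t : R) (k : Fin N) :
      (t + c) * (p k).eval (t + h) = (t + c) * (p k).eval t + (p k).eval t * (h * k) := by
    simp only [p, Lagrange.eval_nodal, sub_neg_eq_add]
    rw [mul_prod_range_add_shift]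
    ring
  let M : Matrix (Fin N) (Fin N) R := of fun i k => (p k).eval (x i)
  let B : Matrix (Fin N) (Fin N) R := diagonal fun k => h * k
  have hrow (i : Fin N) : (x i + c) * (vandermonde (x + Pi.single i h)).det =
      (x i + c) * M.det + (M.updateRow i ((M * B) i)).det := by
    have hmatrix : (of fun j k => (p k).eval ((x + Pi.single i h : Fin N → R) j)) =
        M.updateRow i fun k => (p k).eval (x i + h) := by
      ext j k
      rcases eq_or_ne j i with rfl | hj <;> simp [M, *]
    have hadd : ((x i + c) • fun k => (p k).eval (x i + h)) = (x i + c) • M i + (M * B) i := by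
      ext k
      simp only [M, B, Pi.smul_apply, Pi.add_apply, of_apply, mul_diagonal, smul_eq_mul, hp]
    rw [hdet, hmatrix, ← det_updateRow_smul, hadd, det_updateRow_add, det_updateRow_smul,
      updateRow_eq_self]
  have htrace : B.trace = h * N.choose 2 := by
    rw [trace_diagonal, ← mul_sum, Fin.sum_univ_eq_sum_range (fun k => (k : R)), ← Nat.cast_sum,
      sum_range_id, Nat.choose_two_right]
  rw [sum_congr rfl fun i _ => hrow i, sum_add_distrib, sum_det_updateRow_mul, htrace, hdet,
    ← sum_mul, add_mul]

theorem det_vandermonde_cons {R : Type*} [CommRing R] (w : R) (x : Fin N → R) :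
    (vandermonde (Fin.cons w x : Fin (N + 1) → R)).det =
      (∏ j, (x j - w)) * (vandermonde x).det := by
  simp only [det_vandermonde, Fin.prod_univ_succ, Fin.prod_Ioi_zero, Fin.prod_Ioi_succ,
    Fin.cons_zero, Fin.cons_succ]

-- The weighted sum of shifts is applied to `x` with the extra node `-1`.
theorem sum_det_vandermonde_add_single_div {K : Type*} [Field K] {x : Fin N → K}
    (hx : ∀ i, x i + 1 ≠ 0) {k : Fin N} (hk : x k = 0) :
    ∑ i, (vandermonde (x + Pi.single i 1)).det / (x i + 1) = (vandermonde x).det := by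
  set P : K := ∏ j, (x j + 1) with hP
  have hP0 : P ≠ 0 := prod_ne_zero_iff.2 fun i _ => hx i
  have hzero : (Fin.cons (-1) x + Pi.single 0 1 : Fin (N + 1) → K) = Fin.cons 0 x := by
    ext j; cases j using Fin.cases <;> simp
  have hsucc (i : Fin N) : (Fin.cons (-1) x + Pi.single i.succ 1 : Fin (N + 1) → K) =
      Fin.cons (-1) (x + Pi.single i 1 : Fin N → K) := by
    ext j; cases j using Fin.cases <;> simp [Pi.single_apply]
  have hprod (i : Fin N) : ∏ j, ((x + Pi.single i 1 : Fin N → K) j + 1) =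
      P * ((x i + 1 + 1) / (x i + 1)) :=
    prod_add_single_of_mul (fun _ t => t + 1) x i (mul_div_cancel₀ _ (hx i)).symm
  have hshift := sum_mul_det_vandermonde_add_single (Fin.cons (-1) x : Fin (N + 1) → K) 0 1
  simp only [Fin.sum_univ_succ, hzero, hsucc, det_vandermonde_cons, Fin.cons_zero, Fin.cons_succ,
    sub_zero, sub_neg_eq_add, prod_eq_zero (mem_univ k) hk, hprod, add_zero, zero_mul, mul_zero,
    zero_add, one_mul, ← hP] at hshift
  have hterm (i : Fin N) : x i * (P * ((x i + 1 + 1) / (x i + 1)) *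
      (vandermonde (x + Pi.single i 1)).det) =
      P * ((x i + 1) * (vandermonde (x + Pi.single i 1)).det -
        (vandermonde (x + Pi.single i 1)).det / (x i + 1)) := by
    field_simp [hx i]
    ring
  rw [sum_congr rfl fun i _ => hterm i, ← mul_sum, mul_left_comm, sum_sub_distrib,
    sum_mul_det_vandermonde_add_single, sum_add_distrib, Nat.choose_succ_succ' N 1] at hshift
  have hcancel := mul_left_cancel₀ hP0 hshift
  simp only [sum_const, card_univ, Fintype.card_fin, nsmul_eq_mul, Nat.choose_one_right,
    Nat.cast_add] at hcancel
  linear_combination -hcancel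

end Vandermonde

section BeadConfigurations

open Finset Matrix

variable {N n : ℕ} {x : Fin N → ℕ}

theorem val_sub_val_le_of_strictMono (hx : StrictMono x) (i j : Fin N) :
    (j : ℕ) - i ≤ x j - x i := by
  simpa using card_le_card_of_injOn (s := Ico i j) (t := Ico (x i) (x j)) x
    (fun k hk => by simpa [hx.lt_iff_lt, hx.le_iff_le] using hk) hx.injective.injOn

theorem val_le_of_strictMono (hx : StrictMono x) (i : Fin N) : (i : ℕ) ≤ x i :=
  (val_sub_val_le_of_strictMono hx ⟨0, i.pos⟩ i).trans (Nat.sub_le _ _)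

theorem exists_eq_zero_of_strictMono_of_sum_lt (hx : StrictMono x)
    (hsum : ∑ i, x i < N + N.choose 2) : ∃ i, x i = 0 := by
  by_contra! hpos
  have hpred : StrictMono fun i => x i - 1 := fun i j hij => by
    have := hx hij
    have := hpos i
    grind
  refine hsum.not_ge ?_
  calc N + N.choose 2 = ∑ i : Fin N, ((i : ℕ) + 1) := by
        rw [sum_add_distrib, Fin.sum_univ_eq_sum_range fun i => i, sum_range_id,
          Nat.choose_two_right, Fin.sum_const, smul_eq_mul, mul_one, add_comm]
    _ ≤ ∑ i, x i := sum_le_sum fun i _ => by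
        have := val_le_of_strictMono hpred i
        have := hpos i
        grind

/-- Strictly increasing sequences `x₀ < ⋯ < x_{N-1}` of bead positions that encode the partitions
of `n` with at most `N` parts `λ₁ ≥ ⋯ ≥ λ_N`, via `x_i = λ_{N-i} + i`. -/
def beadConfigs (N n : ℕ) : Finset (Fin N → ℕ) :=
  (piAntidiag univ (n + N.choose 2)).filter StrictMono

theorem mem_beadConfigs : x ∈ beadConfigs N n ↔ ∑ i, x i = n + N.choose 2 ∧ StrictMono x := by
  simp [beadConfigs]

variable {K : Type*} [Field K]

/-- The number of standard tableaux of shape `λ` divided by `|λ|!`, by Frobenius' formula in the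
bead positions `x` of `λ`. -/
def normalizedDim (K : Type*) [Field K] (x : Fin N → ℕ) : K :=
  (vandermonde fun i => (x i : K)).det / ∏ i, ((x i).factorial : K)

/-- The product of `z + c(□)` over the boxes of `λ`, in the bead positions `x` of `λ`: the boxes in
the row of the `i`-th bead have contents `k + 1 - N` with `i ≤ k < x i`. -/
def contentProd (z : K) (x : Fin N → ℕ) : K :=
  ∏ i : Fin N, ∏ k ∈ Ico (i : ℕ) (x i), (z + 1 - N + k)

/-- The weight `∏ (z + c(□)) (z' + c(□)) / h(□)²` of `λ`, in the bead positions `x` of `λ`. -/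
def beadWeight (z z' : K) (x : Fin N → ℕ) : K :=
  contentProd z x * contentProd z' x * normalizedDim K x ^ 2

theorem cast_add_single (x : Fin N → ℕ) (i : Fin N) :
    (fun j => (((x + Pi.single i 1 : Fin N → ℕ) j : ℕ) : K)) =
      (fun j => (x j : K)) + Pi.single i 1 := by
  ext j
  rcases eq_or_ne j i with rfl | hj <;> simp [*]

theorem exists_eq_add_single {i : Fin N} (hi : x i ≠ 0) :
    ∃ y : Fin N → ℕ, x = y + Pi.single i 1 := by
  refine ⟨x - Pi.single i 1, funext fun j => ?_⟩
  rcases eq_or_ne j i with rfl | hj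
  · simp [Nat.sub_add_cancel (Nat.one_le_iff_ne_zero.2 hi)]
  · simp [hj]

theorem contentProd_add_single (z : K) {i : Fin N} (hi : (i : ℕ) ≤ x i) :
    contentProd z (x + Pi.single i 1) = contentProd z x * (z + 1 - N + x i) :=
  prod_add_single_of_mul (fun (j : Fin N) t => ∏ k ∈ Ico (j : ℕ) t, (z + 1 - N + k)) x i
    (prod_Ico_succ_top hi _)

theorem prod_factorial_add_single (x : Fin N → ℕ) (i : Fin N) :
    ∏ j, (((x + Pi.single i 1 : Fin N → ℕ) j).factorial : K) =
      (∏ j, ((x j).factorial : K)) * (x i + 1) :=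
  prod_add_single_of_mul (fun _ t => (t.factorial : K)) x i (by
    rw [Nat.factorial_succ]; push_cast; ring)

theorem injective_of_normalizedDim_ne_zero (hx : normalizedDim K x ≠ 0) :
    Function.Injective x := fun _ _ hij =>
  det_vandermonde_ne_zero_iff.1 (div_ne_zero_iff.1 hx).1 (congrArg Nat.cast hij)

theorem strictMono_add_single_iff (i : Fin N) (hx : normalizedDim K x ≠ 0)
    (hx' : normalizedDim K (x + Pi.single i 1) ≠ 0) :
    StrictMono (x + Pi.single i 1) ↔ StrictMono x := by
  have hbound (j : Fin N) : x j ≤ (x + Pi.single i 1 : Fin N → ℕ) j ∧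
      (x + Pi.single i 1 : Fin N → ℕ) j ≤ x j + 1 := by
    rcases eq_or_ne j i with rfl | hj <;> simp [*]
  constructor
  · refine fun h => Monotone.strictMono_of_injective (monotone_iff_forall_lt.2 fun j k hjk => ?_)
      (injective_of_normalizedDim_ne_zero hx)
    have := h hjk
    have := hbound j
    have := hbound k
    omega
  · refine fun h => Monotone.strictMono_of_injective (monotone_iff_forall_lt.2 fun j k hjk => ?_)
      (injective_of_normalizedDim_ne_zero hx')
    have := h hjk
    have := hbound j
    have := hbound k
    omega

theorem sum_beadConfigs_add_single (i : Fin N) (f : (Fin N → ℕ) → K) :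
    ∑ y ∈ beadConfigs N n,
        f (y + Pi.single i 1) * (normalizedDim K y * normalizedDim K (y + Pi.single i 1)) =
      ∑ x ∈ beadConfigs N (n + 1) with x i ≠ 0,
        f x * (normalizedDim K (x - Pi.single i 1) * normalizedDim K x) := by
  have hsum (y : Fin N → ℕ) : ∑ j, (y + Pi.single i 1 : Fin N → ℕ) j = ∑ j, y j + 1 := by
    simp [sum_add_distrib]
  refine sum_bij_ne_zero (fun y _ _ => y + Pi.single i 1) (fun y hy hne => ?_)
    (fun _ _ _ _ _ _ h => add_right_cancel h) (fun x hx hne => ?_) fun y _ _ => ?_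
  · have hD := mul_ne_zero_iff.1 (right_ne_zero_of_mul hne)
    obtain ⟨hy, hmono⟩ := mem_beadConfigs.1 hy
    exact mem_filter.2 ⟨mem_beadConfigs.2 ⟨by rw [hsum]; omega,
      (strictMono_add_single_iff i hD.1 hD.2).2 hmono⟩, by simp⟩
  · have hD := mul_ne_zero_iff.1 (right_ne_zero_of_mul hne)
    obtain ⟨hx, hi⟩ := mem_filter.1 hx
    obtain ⟨y, rfl⟩ := exists_eq_add_single hi
    rw [add_tsub_cancel_right] at hD hne
    rw [mem_beadConfigs, strictMono_add_single_iff i hD.1 hD.2, hsum] at hx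
    exact ⟨y, mem_beadConfigs.2 ⟨by omega, hx.2⟩, hne, rfl⟩
  · rw [add_tsub_cancel_right]

variable [CharZero K]

theorem sum_normalizedDim_add_single (z z' : K) (hx : x ∈ beadConfigs N n) (hn : n < N) :
    ∑ i, normalizedDim K (x + Pi.single i 1) * ((z + 1 - N + x i) * (z' + 1 - N + x i)) =
      (z * z' + n) * normalizedDim K x := by
  obtain ⟨hsum, hmono⟩ := mem_beadConfigs.1 hx
  obtain ⟨k, hk⟩ := exists_eq_zero_of_strictMono_of_sum_lt hmono (by omega)
  set v : Fin N → K := fun j => (x j : K)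
  have hv (i : Fin N) : v i + 1 ≠ 0 := Nat.cast_add_one_ne_zero _
  have hvsum : ∑ i, v i = n + N.choose 2 := by
    simp only [v]; exact_mod_cast hsum
  have hchoose : 2 * (N.choose 2 : K) = N * (N - 1) := by
    rw [Nat.cast_choose_two]; ring
  have hterm (i : Fin N) : normalizedDim K (x + Pi.single i 1) *
      ((z + 1 - N + v i) * (z' + 1 - N + v i)) =
      ((v i + (z + z' + 1 - 2 * N)) * (vandermonde (v + Pi.single i 1)).det +
        (z - N) * (z' - N) * ((vandermonde (v + Pi.single i 1)).det / (v i + 1))) /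
          ∏ j, ((x j).factorial : K) := by
    rw [normalizedDim, cast_add_single, prod_factorial_add_single, ← div_div, div_right_comm]
    have := hv i
    field_simp
    ring
  rw [sum_congr rfl fun i _ => hterm i, ← sum_div, sum_add_distrib, ← mul_sum,
    sum_mul_det_vandermonde_add_single,
    sum_det_vandermonde_add_single_div hv (k := k) (by simp [v, hk]), sum_add_distrib, hvsum,
    normalizedDim, ← mul_div_assoc, ← add_mul, sum_const, card_univ, Fintype.card_fin, nsmul_eq_mul]
  congr 2
  linear_combination hchoose

theorem sum_normalizedDim_sub_single (hx : x ∈ beadConfigs N n) :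
    ∑ i with x i ≠ 0, normalizedDim K (x - Pi.single i 1) = n * normalizedDim K x := by
  set v : Fin N → K := fun j => (x j : K)
  have hvsum : ∑ i, v i = n + N.choose 2 := by
    simp only [v]; exact_mod_cast (mem_beadConfigs.1 hx).1
  have hterm (i : Fin N) : (if x i ≠ 0 then normalizedDim K (x - Pi.single i 1) else 0) =
      (v i + 0) * (vandermonde (v + Pi.single i (-1))).det / ∏ j, ((x j).factorial : K) := by
    split_ifs with hi
    · obtain ⟨y, rfl⟩ := exists_eq_add_single hi
      have hv : v = (fun j => (y j : K)) + Pi.single i 1 := cast_add_single y i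
      have hvi : v i = y i + 1 := by rw [hv]; simp
      have hyi : (y i : K) + 1 ≠ 0 := Nat.cast_add_one_ne_zero _
      rw [add_tsub_cancel_right, prod_factorial_add_single, add_zero, hvi, hv, add_assoc,
        ← Pi.single_add, add_neg_cancel, Pi.single_zero, add_zero, mul_comm, normalizedDim,
        mul_div_mul_right _ _ hyi]
    · simp [v, not_not.1 hi]
  rw [sum_filter, sum_congr rfl fun i _ => hterm i, ← sum_div, sum_mul_det_vandermonde_add_single]
  simp only [add_zero, hvsum, normalizedDim]
  ring

theorem succ_mul_sum_beadWeight (z z' : K) (hn : n < N) :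
    (n + 1) * ∑ x ∈ beadConfigs N (n + 1), beadWeight z z' x =
      (z * z' + n) * ∑ x ∈ beadConfigs N n, beadWeight z z' x := by
  let c (x : Fin N → ℕ) : K := contentProd z x * contentProd z' x
  have hc {y : Fin N → ℕ} (hy : y ∈ beadConfigs N n) (i : Fin N) :
      c (y + Pi.single i 1) = c y * ((z + 1 - N + y i) * (z' + 1 - N + y i)) := by
    have hi := val_le_of_strictMono (mem_beadConfigs.1 hy).2 i
    simp only [c, contentProd_add_single _ hi]
    ring
  calc (n + 1) * ∑ x ∈ beadConfigs N (n + 1), beadWeight z z' x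
    _ = ∑ x ∈ beadConfigs N (n + 1), ∑ i with x i ≠ 0,
        c x * (normalizedDim K (x - Pi.single i 1) * normalizedDim K x) := by
      rw [mul_sum]
      refine sum_congr rfl fun x hx => ?_
      rw [← mul_sum, ← sum_mul, sum_normalizedDim_sub_single hx, beadWeight]
      push_cast
      ring
    _ = ∑ i, ∑ y ∈ beadConfigs N n,
        c (y + Pi.single i 1) * (normalizedDim K y * normalizedDim K (y + Pi.single i 1)) := by
      simp only [sum_beadConfigs_add_single, sum_filter]
      exact sum_comm
    _ = (z * z' + n) * ∑ y ∈ beadConfigs N n, beadWeight z z' y := by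
      rw [sum_comm, mul_sum]
      refine sum_congr rfl fun y hy => ?_
      calc _ = c y * normalizedDim K y * ∑ i, normalizedDim K (y + Pi.single i 1) *
            ((z + 1 - N + y i) * (z' + 1 - N + y i)) := by
            rw [mul_sum]
            exact sum_congr rfl fun i _ => by rw [hc hy]; ring
        _ = (z * z' + n) * beadWeight z z' y := by
            rw [sum_normalizedDim_add_single z z' hy hn, beadWeight]
            ring

end BeadConfigurations

section YoungDiagrams

open Finset Matrix

variable {N n : ℕ} {Y : YoungDiagram}

theorem colLen_le_card (Y : YoungDiagram) (j : ℕ) : Y.colLen j ≤ Y.card := by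
  rw [Y.colLen_eq_card]
  exact card_le_card (filter_subset _ _)

theorem lt_rowLen_iff_lt_colLen {i j : ℕ} : j < Y.rowLen i ↔ i < Y.colLen j := by
  rw [← YoungDiagram.mem_iff_lt_rowLen, YoungDiagram.mem_iff_lt_colLen]

theorem mem_cells_iff_lt_rowLen {c : ℕ × ℕ} : c ∈ Y.cells ↔ c.2 < Y.rowLen c.1 := by
  rw [YoungDiagram.mem_cells, ← YoungDiagram.mem_iff_lt_rowLen]

@[to_additive]
theorem prod_cells_eq_prod_rows {M : Type*} [CommMonoid M] (hN : Y.colLen 0 ≤ N)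
    (f : ℕ × ℕ → M) :
    ∏ c ∈ Y.cells, f c = ∏ i : Fin N, ∏ j ∈ range (Y.rowLen i.rev), f (i.rev, j) := by
  have hcells (c : ℕ × ℕ) : c ∈ Y.cells ↔ c.1 ∈ range N ∧ c.2 ∈ range (Y.rowLen c.1) := by
    have := Y.colLen_anti 0 c.2 (Nat.zero_le _)
    rw [mem_cells_iff_lt_rowLen, mem_range, mem_range, lt_rowLen_iff_lt_colLen]
    omega
  rw [prod_finset_product Y.cells (range N) (fun i => range (Y.rowLen i)) hcells, prod_range]
  exact (Equiv.prod_comp Fin.revPerm _).symm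

/-- The bead positions of `Y`, with `N` beads, one for each of the first `N` rows of `Y`; beads are
numbered from the bottom row upwards, which makes them increasing. -/
def beads (N : ℕ) (Y : YoungDiagram) (i : Fin N) : ℕ := Y.rowLen i.rev + i

theorem beads_strictMono (N : ℕ) (Y : YoungDiagram) : StrictMono (beads N Y) := fun _ _ hij =>
  add_lt_add_of_le_of_lt (Y.rowLen_anti _ _ (Fin.rev_le_rev.2 hij.le)) hij

theorem beads_mem_beadConfigs (hN : Y.colLen 0 ≤ N) : beads N Y ∈ beadConfigs N Y.card := by
  refine mem_beadConfigs.2 ⟨?_, beads_strictMono N Y⟩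
  have hcard : Y.card = ∑ i : Fin N, Y.rowLen i.rev := by
    rw [YoungDiagram.card, card_eq_sum_ones, sum_cells_eq_sum_rows hN]
    simp
  simp only [beads]
  rw [sum_add_distrib, hcard, Fin.sum_univ_eq_sum_range fun i => i, sum_range_id,
    Nat.choose_two_right]

theorem injOn_beads (N : ℕ) : Set.InjOn (beads N) {Y | Y.colLen 0 ≤ N} := by
  intro Y hY Y' hY' h
  refine SetLike.ext fun ⟨i, j⟩ => ?_
  rw [YoungDiagram.mem_iff_lt_rowLen, YoungDiagram.mem_iff_lt_rowLen]
  by_cases hi : i < N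
  · have hrow := congrFun h (Fin.rev ⟨i, hi⟩)
    simp only [beads, Fin.rev_rev] at hrow
    rw [add_right_cancel hrow]
  · have := Y.colLen_anti 0 j (Nat.zero_le _)
    have := Y'.colLen_anti 0 j (Nat.zero_le _)
    simp only [Set.mem_ofPred_eq] at hY hY'
    rw [lt_rowLen_iff_lt_colLen, lt_rowLen_iff_lt_colLen]
    omega

theorem exists_beads_eq {x : Fin N → ℕ} (hx : StrictMono x) :
    ∃ Y : YoungDiagram, Y.colLen 0 ≤ N ∧ beads N Y = x := by
  have hanti : Antitone fun i : Fin N => x i.rev - i.rev := fun i j hij => by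
    have := val_sub_val_le_of_strictMono hx j.rev i.rev
    have := val_le_of_strictMono hx j.rev
    have : (j.rev : ℕ) ≤ i.rev := Fin.rev_le_rev.2 hij
    have := hx.monotone (Fin.rev_le_rev.2 hij)
    grind
  let Y := YoungDiagram.ofRowLens (List.ofFn fun i : Fin N => x i.rev - i.rev) hanti.sortedGE_ofFn
  have hmem (i j : ℕ) : (i, j) ∈ Y ↔ ∃ hi : i < N, j < x (Fin.rev ⟨i, hi⟩) - Fin.rev ⟨i, hi⟩ := by
    simp [Y, YoungDiagram.mem_ofRowLens]
  refine ⟨Y, ?_, funext fun i => ?_⟩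
  · by_contra! hlt
    exact lt_irrefl N ((hmem N 0).1 (YoungDiagram.mem_iff_lt_colLen.2 hlt)).1
  · have hrow : Y.rowLen i.rev = x i - i := eq_of_forall_lt_iff fun j => by
      rw [← YoungDiagram.mem_iff_lt_rowLen, hmem]
      simp only [Fin.eta, Fin.rev_rev, Fin.is_lt, exists_true_left]
    rw [beads, hrow, Nat.sub_add_cancel (val_le_of_strictMono hx i)]

theorem bijOn_beads (hn : n ≤ N) :
    Set.BijOn (beads N) {Y | Y.card = n} (beadConfigs N n) := by
  have hrows {Y : YoungDiagram} (hY : Y.card = n) : Y.colLen 0 ≤ N :=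
    (colLen_le_card Y 0).trans (hY.trans_le hn)
  refine ⟨fun Y hY => ?_, (injOn_beads N).mono fun Y => hrows, fun x hx => ?_⟩
  · have := beads_mem_beadConfigs (hrows hY)
    rwa [hY] at this
  · obtain ⟨hsum, hmono⟩ := mem_beadConfigs.1 hx
    obtain ⟨Y, hY, rfl⟩ := exists_beads_eq hmono
    have hcard := (mem_beadConfigs.1 (beads_mem_beadConfigs hY)).1
    exact ⟨Y, by rw [Set.mem_ofPred_eq]; omega, rfl⟩

/-- The `j`-th position not occupied by the beads of `Y`, when `Y` has at most `N` rows. -/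
def beadGap (N : ℕ) (Y : YoungDiagram) (j : ℕ) : ℕ := N - Y.colLen j + j

theorem beadGap_strictMono (N : ℕ) (Y : YoungDiagram) : StrictMono (beadGap N Y) :=
  fun j k hjk => add_lt_add_of_le_of_lt (Nat.sub_le_sub_left (Y.colLen_anti j k hjk.le) N) hjk

theorem beads_ne_beadGap (hN : Y.colLen 0 ≤ N) (i : Fin N) (j : ℕ) :
    beads N Y i ≠ beadGap N Y j := by
  have := Y.colLen_anti 0 j (Nat.zero_le _)
  have := lt_rowLen_iff_lt_colLen (Y := Y) (i := i.rev) (j := j)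
  rw [Fin.val_rev] at this
  rw [beads, beadGap, Fin.val_rev]
  omega

theorem hookLen_add_beadGap (hN : Y.colLen 0 ≤ N) {i : Fin N} {j : ℕ} (hj : j < Y.rowLen i.rev) :
    hookLen Y (i.rev, j) + beadGap N Y j = beads N Y i := by
  have := Y.colLen_anti 0 j (Nat.zero_le _)
  have := lt_rowLen_iff_lt_colLen.1 hj
  rw [Fin.val_rev] at *
  simp only [hookLen, beadGap, beads, Fin.val_rev]
  omega

theorem hookLen_pos {c : ℕ × ℕ} (hc : c ∈ Y.cells) : 0 < hookLen Y c := by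
  have hrow := mem_cells_iff_lt_rowLen.1 hc
  have hcol := lt_rowLen_iff_lt_colLen.1 hrow
  unfold hookLen
  omega

theorem prod_hookLen_row_mul_prod_sub (hN : Y.colLen 0 ≤ N) (i : Fin N) :
    (∏ j ∈ range (Y.rowLen i.rev), hookLen Y (i.rev, j)) *
      ∏ k ∈ Iio i, (beads N Y i - beads N Y k) = (beads N Y i).factorial := by
  have hdisj : Disjoint ((range (Y.rowLen i.rev)).image (beadGap N Y))
      ((Iio i).image (beads N Y)) := by
    simp [disjoint_left, beads_ne_beadGap hN]
  have hunion : (range (Y.rowLen i.rev)).image (beadGap N Y) ∪ (Iio i).image (beads N Y) =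
      range (beads N Y i) := by
    refine eq_of_subset_of_card_le (union_subset ?_ ?_) ?_
    · refine image_subset_iff.2 fun j hj => mem_range.2 ?_
      have hj := mem_range.1 hj
      have := hookLen_add_beadGap hN hj
      have := hookLen_pos (mem_cells_iff_lt_rowLen (c := (i.rev, j)).2 hj)
      omega
    · exact image_subset_iff.2 fun k hk => mem_range.2 (beads_strictMono N Y (mem_Iio.1 hk))
    · rw [card_union_of_disjoint hdisj,
        card_image_of_injective _ (beadGap_strictMono N Y).injective,
        card_image_of_injective _ (beads_strictMono N Y).injective, card_range, card_range,
        Fin.card_Iio, beads]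
  rw [← Nat.descFactorial_self, Nat.descFactorial_eq_prod_range, ← hunion, prod_union hdisj,
    prod_image (beadGap_strictMono N Y).injective.injOn,
    prod_image (beads_strictMono N Y).injective.injOn]
  congr 1
  exact prod_congr rfl fun j hj => by
    rw [← hookLen_add_beadGap hN (mem_range.1 hj), Nat.add_sub_cancel_right]

variable {K : Type*} [Field K]

theorem normalizedDim_beads [CharZero K] (hN : Y.colLen 0 ≤ N) :
    normalizedDim K (beads N Y) = (∏ c ∈ Y.cells, (hookLen Y c : K))⁻¹ := by
  have hdet : (vandermonde fun i => (beads N Y i : K)).det =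
      ∏ i, ∏ k ∈ Iio i, ((beads N Y i - beads N Y k : ℕ) : K) := by
    rw [det_vandermonde, prod_comm' (t' := univ) (s' := fun i => Iio i) (by simp)]
    refine prod_congr rfl fun i _ => prod_congr rfl fun k hk => ?_
    rw [Nat.cast_sub (beads_strictMono N Y (mem_Iio.1 hk)).le]
  have hhook : (∏ c ∈ Y.cells, (hookLen Y c : K)) * (vandermonde fun i => (beads N Y i : K)).det =
      ∏ i, ((beads N Y i).factorial : K) := by
    rw [hdet, prod_cells_eq_prod_rows hN, ← prod_mul_distrib]
    exact prod_congr rfl fun i _ => by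
      rw [← prod_hookLen_row_mul_prod_sub hN i]
      push_cast
      rfl
  have hfactorial : ∏ i, ((beads N Y i).factorial : K) ≠ 0 :=
    prod_ne_zero_iff.2 fun i _ => Nat.cast_ne_zero.2 (Nat.factorial_ne_zero _)
  rw [normalizedDim, ← hhook]
  rw [← hhook] at hfactorial
  rw [div_mul_cancel_right₀ (right_ne_zero_of_mul hfactorial)]

theorem contentProd_beads (hN : Y.colLen 0 ≤ N) (z : K) :
    contentProd z (beads N Y) = ∏ c ∈ Y.cells, (z + cellContent c) := by
  rw [prod_cells_eq_prod_rows hN, contentProd]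
  refine prod_congr rfl fun i _ => ?_
  rw [prod_Ico_eq_prod_range, beads, Nat.add_sub_cancel_right]
  refine prod_congr rfl fun j _ => ?_
  have hrev : (i.rev : ℕ) + i + 1 = N := by rw [Fin.val_rev]; omega
  simp only [cellContent, ← hrev]
  push_cast
  ring

theorem zWeightR_eq_beadWeight (z z' : ℝ) (hN : Y.colLen 0 ≤ N) :
    zWeightR z z' Y = beadWeight z z' (beads N Y) := by
  rw [beadWeight, contentProd_beads hN, contentProd_beads hN, normalizedDim_beads hN, inv_pow,
    ← div_eq_mul_inv, ← prod_mul_distrib, ← prod_pow, ← prod_div_distrib, zWeightR]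

theorem tsum_zWeightR_eq_sum_beadWeight (z z' : ℝ) (hn : n ≤ N) :
    ∑' Y : {Y : YoungDiagram // Y.card = n}, zWeightR z z' Y =
      ∑ x ∈ beadConfigs N n, beadWeight z z' x := by
  rw [← Finset.tsum_subtype' (beadConfigs N n) (beadWeight z z'), ← (bijOn_beads hn).equiv.tsum_eq]
  exact tsum_congr fun Y => zWeightR_eq_beadWeight z z'
    ((colLen_le_card Y.1 0).trans (Y.2.trans_le hn))

theorem factorial_mul_tsum_zWeightR (z z' : ℝ) (n : ℕ) :
    (n.factorial : ℝ) * ∑' Y : {Y : YoungDiagram // Y.card = n}, zWeightR z z' Y =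
      (ascPochhammer ℝ n).eval (z * z') := by
  induction n with
  | zero =>
    rw [tsum_zWeightR_eq_sum_beadWeight (N := 0) z z' le_rfl]
    simp [beadConfigs, beadWeight, contentProd, normalizedDim, Subsingleton.strictMono]
  | succ n ih =>
    rw [ascPochhammer_succ_eval, ← ih, tsum_zWeightR_eq_sum_beadWeight z z' le_rfl,
      tsum_zWeightR_eq_sum_beadWeight z z' n.le_succ, Nat.factorial_succ]
    push_cast
    linear_combination (n.factorial : ℝ) * succ_mul_sum_beadWeight z z' n.lt_succ_self

theorem add_intCast_mul_add_intCast_pos {F : Type*} [Field F] [LinearOrder F]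
    [IsStrictOrderedRing F] {m : ℤ} {z z' : F} (hz : z ∈ Set.Ioo (m : F) (m + 1))
    (hz' : z' ∈ Set.Ioo (m : F) (m + 1)) (k : ℤ) : 0 < (z + k) * (z' + k) := by
  rcases le_or_gt 0 (m + k) with hk | hk
  · have : (0 : F) ≤ m + k := by exact_mod_cast hk
    exact mul_pos (by linarith [hz.1]) (by linarith [hz'.1])
  · have : (m : F) + k + 1 ≤ 0 := by exact_mod_cast hk
    exact mul_pos_of_neg_of_neg (by linarith [hz.2]) (by linarith [hz'.2])

theorem zWeightR_pos {m : ℤ} {z z' : ℝ} (hz : z ∈ Set.Ioo (m : ℝ) (m + 1))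
    (hz' : z' ∈ Set.Ioo (m : ℝ) (m + 1)) (Y : YoungDiagram) : 0 < zWeightR z z' Y :=
  prod_pos fun _ hc => div_pos (add_intCast_mul_add_intCast_pos hz hz' _)
    (pow_pos (Nat.cast_pos.2 (hookLen_pos hc)) 2)

end YoungDiagrams

/-- **complementary series.** Let `m ∈ ℤ` and `z, z' ∈ ℝ` with
`m < z < m+1` and `m < z' < m+1`.  Then for every `n` and every partition `λ` of `n`,
`M_n(λ) = (n!/(zz')_n) Π_{□∈λ}(z+c(□))(z'+c(□))/h(□)²` is strictly positive, and
`Σ_{|λ|=n} M_n(λ) = 1`. -/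
theorem zMeasure_complementary_series_prob (m : ℤ) (z z' : ℝ)
    (hz : (m : ℝ) < z ∧ z < m + 1) (hz' : (m : ℝ) < z' ∧ z' < m + 1) (n : ℕ) :
    (∀ Y : YoungDiagram, Y.card = n →
      0 < (n.factorial : ℝ) / (ascPochhammer ℝ n).eval (z * z') * zWeightR z z' Y) ∧
    ∑' Y : {Y : YoungDiagram // Y.card = n},
        (n.factorial : ℝ) / (ascPochhammer ℝ n).eval (z * z') * zWeightR z z' Y.1 = 1 := by
  have hzz : 0 < z * z' := by simpa using add_intCast_mul_add_intCast_pos hz hz' 0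
  have hpoch : 0 < (ascPochhammer ℝ n).eval (z * z') := ascPochhammer_pos n _ hzz
  refine ⟨fun Y _ => mul_pos (div_pos (by positivity) hpoch) (zWeightR_pos hz hz' Y), ?_⟩
  rw [tsum_mul_left, div_mul_eq_mul_div, factorial_mul_tsum_zWeightR, div_self hpoch.ne']

end
end

section
/- Let m ∈ ℤ and let z, z' be real numbers with m < z < m+1 and m < z' < m+1. For k ∈ ℤ+1/2 define q_k = Γ(z'+k+1/2)/Γ(z+k+1/2), where Γ is the Gamma function. Then for every k ∈ ℤ+1/2: (i) q_k > 0, and (ii) (z+k+1/2)·q_{k+1} = (z'+k+1/2)·q_k. Consequently the Hermitian form Q on the span of {v_k}_{k∈ℤ+1/2} defined by Q(v_k, v_l) = δ_{kl}·q_k is positive definite and satisfies the invariance Q(U u, v) = Q(u, D v) for the operators U v_k = (z+k+1/2)v_{k+1} and D v_k = (z'+k−1/2)v_{k−1}. -/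
open scoped Classical

noncomputable section

/-- `q_k = Γ(z'+k+1/2)/Γ(z+k+1/2)` for the half-integer `k = a + 1/2` (`a ∈ ℤ`), so that
`z+k+1/2 = z+a+1` and `z'+k+1/2 = z'+a+1`. -/
def qGamma (z z' : ℝ) (a : ℤ) : ℝ :=
  Real.Gamma (z' + a + 1) / Real.Gamma (z + a + 1)

/-- The Hermitian form `Q` on the span of `{v_k}_{k ∈ ℤ+1/2}` (finitely supported complex
functions on ℤ in the encoding `k = a + 1/2`) with `Q(v_k, v_l) = δ_{kl} q_k`. -/
def Qform (z z' : ℝ) (f g : ℤ →₀ ℂ) : ℂ :=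
  f.sum fun a c => (starRingEnd ℂ) c * g a * (qGamma z z' a : ℂ)

/-- The operator `U v_k = (z+k+1/2) v_{k+1}`; in the encoding `k = a + 1/2` the
coefficient is `z + a + 1`. -/
def Uop (z : ℝ) (f : ℤ →₀ ℂ) : ℤ →₀ ℂ :=
  f.sum fun a c => Finsupp.single (a + 1) (((z : ℂ) + (a : ℂ) + 1) * c)

/-- The operator `D v_k = (z'+k−1/2) v_{k−1}`; in the encoding `k = a + 1/2` the
coefficient is `z' + a`. -/
def Dop (z' : ℝ) (f : ℤ →₀ ℂ) : ℤ →₀ ℂ :=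
  f.sum fun a c => Finsupp.single (a - 1) (((z' : ℂ) + (a : ℂ)) * c)

/-!
The Gamma function has neither zeros nor poles between consecutive integers, so by continuity it
has constant sign there; since `z+k+1/2` and `z'+k+1/2` lie between the same two integers, their
Gamma values have the same sign and `q_k > 0`. Both `Q(U u, v)` and `Q(u, D v)` pair the
`k`-th coefficient of `u` with the `(k+1)`-st coefficient of `v`, with weights
`(z+k+1/2) q_{k+1}` and `(z'+k+1/2) q_k` respectively, so the functional equation of the Gamma
function is exactly the invariance of `Q`.
-/

section IntervalsBetweenIntegers

variable {R : Type*} [Ring R] [LinearOrder R] [IsStrictOrderedRing R] {n : ℤ} {x : R}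

theorem ne_intCast_of_mem_Ioo (hx : x ∈ Set.Ioo (n : R) (n + 1)) (k : ℤ) : x ≠ k := by
  rintro rfl
  have hnk : n < k := mod_cast hx.1
  have hkn : k < n + 1 := mod_cast hx.2
  omega

theorem add_intCast_add_one_mem_Ioo (hx : x ∈ Set.Ioo (n : R) (n + 1)) (a : ℤ) :
    x + a + 1 ∈ Set.Ioo ((n + a + 1 : ℤ) : R) ((n + a + 1 : ℤ) + 1) := by
  push_cast
  refine ⟨by gcongr; exact hx.1, ?_⟩
  calc x + a + 1 < n + 1 + a + 1 := by gcongr; exact hx.2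
    _ = n + a + 1 + 1 := by abel

theorem add_intCast_add_one_ne_zero (hx : x ∈ Set.Ioo (n : R) (n + 1)) (a : ℤ) :
    x + a + 1 ≠ 0 := by
  simpa only [Int.cast_zero] using ne_intCast_of_mem_Ioo (add_intCast_add_one_mem_Ioo hx a) 0

end IntervalsBetweenIntegers

theorem mul_pos_of_isPreconnected {X R : Type*} [TopologicalSpace X] [Ring R] [LinearOrder R]
    [IsStrictOrderedRing R] [TopologicalSpace R] [OrderClosedTopology R] {s : Set X} {f : X → R}
    (hs : IsPreconnected s) (hf : ContinuousOn f s) (hf₀ : ∀ x ∈ s, f x ≠ 0) {x y : X}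
    (hx : x ∈ s) (hy : y ∈ s) : 0 < f x * f y := by
  by_contra! hxy
  obtain ⟨t, hts, ht⟩ : ∃ t ∈ s, f t = 0 := by
    rcases mul_nonpos_iff.1 hxy with ⟨hx₀, hy₀⟩ | ⟨hx₀, hy₀⟩
    · exact hs.intermediate_value₂ hy hx hf continuousOn_const hy₀ hx₀
    · exact hs.intermediate_value₂ hx hy hf continuousOn_const hx₀ hy₀
  exact hf₀ t hts ht

theorem Gamma_mul_Gamma_pos {s : Set ℝ} (hs : IsPreconnected s)
    (hpole : ∀ x ∈ s, ∀ n : ℕ, x ≠ -n) {x y : ℝ} (hx : x ∈ s) (hy : y ∈ s) :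
    0 < Real.Gamma x * Real.Gamma y :=
  mul_pos_of_isPreconnected hs
    (fun t ht => (Real.differentiableAt_Gamma (hpole t ht)).continuousAt.continuousWithinAt)
    (fun t ht => Real.Gamma_ne_zero (hpole t ht)) hx hy

theorem Gamma_div_Gamma_pos_of_mem_Ioo {n : ℤ} {x y : ℝ} (hx : x ∈ Set.Ioo (n : ℝ) (n + 1))
    (hy : y ∈ Set.Ioo (n : ℝ) (n + 1)) : 0 < Real.Gamma x / Real.Gamma y := by
  have hpole : ∀ t ∈ Set.Ioo (n : ℝ) (n + 1), ∀ k : ℕ, t ≠ -k := fun t ht k =>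
    mod_cast ne_intCast_of_mem_Ioo ht (-k)
  exact div_pos_iff.2 (mul_pos_iff.1 (Gamma_mul_Gamma_pos isPreconnected_Ioo hpole hx hy))

theorem qGamma_pos {m : ℤ} {z z' : ℝ} (hz : z ∈ Set.Ioo (m : ℝ) (m + 1))
    (hz' : z' ∈ Set.Ioo (m : ℝ) (m + 1)) (a : ℤ) : 0 < qGamma z z' a :=
  Gamma_div_Gamma_pos_of_mem_Ioo (add_intCast_add_one_mem_Ioo hz' a)
    (add_intCast_add_one_mem_Ioo hz a)

theorem mul_qGamma_add_one {z z' : ℝ} {a : ℤ} (hz : z + a + 1 ≠ 0) (hz' : z' + a + 1 ≠ 0) :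
    (z + a + 1) * qGamma z z' (a + 1) = (z' + a + 1) * qGamma z z' a := by
  simp only [qGamma, Int.cast_add, Int.cast_one, ← add_assoc]
  rw [Real.Gamma_add_one hz, Real.Gamma_add_one hz', mul_div_mul_comm, ← mul_assoc,
    mul_div_cancel₀ _ hz]

section HermitianForm

variable {z z' : ℝ}

theorem Qform_self (f : ℤ →₀ ℂ) :
    Qform z z' f f = ((f.sum fun a c => Complex.normSq c * qGamma z z' a : ℝ) : ℂ) := by
  simp only [Qform, Finsupp.sum, Complex.ofReal_sum, Complex.ofReal_mul,
    Complex.normSq_eq_conj_mul_self]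

theorem Qform_self_im (f : ℤ →₀ ℂ) : (Qform z z' f f).im = 0 := by
  rw [Qform_self, Complex.ofReal_im]

theorem Qform_self_re_pos {f : ℤ →₀ ℂ} (hq : ∀ a ∈ f.support, 0 < qGamma z z' a) (hf : f ≠ 0) :
    0 < (Qform z z' f f).re := by
  rw [Qform_self, Complex.ofReal_re]
  refine Finset.sum_pos (fun a ha => ?_) (Finsupp.support_nonempty_iff.2 hf)
  exact mul_pos (Complex.normSq_pos.2 (Finsupp.mem_support_iff.1 ha)) (hq a ha)

theorem Dop_apply (w : ℝ) (f : ℤ →₀ ℂ) (a : ℤ) :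
    Dop w f a = ((w : ℂ) + a + 1) * f (a + 1) := by
  simp +contextual [Dop, Finsupp.sum_apply, Finsupp.single_apply, sub_eq_iff_eq_add, add_assoc]

theorem Qform_Uop_left (w : ℝ) (u v : ℤ →₀ ℂ) :
    Qform z z' (Uop w u) v = u.sum fun a c =>
      (starRingEnd ℂ) c * v (a + 1) * (((w + a + 1) * qGamma z z' (a + 1) : ℝ) : ℂ) := by
  rw [Qform, Uop, Finsupp.sum_sum_index (by simp) (by intros; rw [map_add]; ring)]
  refine Finsupp.sum_congr fun a _ => ?_
  rw [Finsupp.sum_single_index (by simp)]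
  simp only [map_mul, map_add, Complex.conj_ofReal, map_one, map_intCast]
  push_cast
  ring

theorem Qform_Dop_right (w : ℝ) (u v : ℤ →₀ ℂ) :
    Qform z z' u (Dop w v) = u.sum fun a c =>
      (starRingEnd ℂ) c * v (a + 1) * (((w + a + 1) * qGamma z z' a : ℝ) : ℂ) := by
  refine Finsupp.sum_congr fun a _ => ?_
  rw [Dop_apply]
  push_cast
  ring

theorem Qform_Uop_eq_Qform_Dop {w w' : ℝ}
    (hq : ∀ a : ℤ, (w + a + 1) * qGamma z z' (a + 1) = (w' + a + 1) * qGamma z z' a)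
    (u v : ℤ →₀ ℂ) : Qform z z' (Uop w u) v = Qform z z' u (Dop w' v) := by
  simp only [Qform_Uop_left, Qform_Dop_right, hq]

end HermitianForm

/-- **complementary series unitarity.** Let `m ∈ ℤ` and `z, z' ∈ (m, m+1)`.
Then for every half-integer `k = a + 1/2`: (i) `q_k > 0`, and
(ii) `(z+k+1/2)·q_{k+1} = (z'+k+1/2)·q_k`.  Consequently the Hermitian form `Q` with
`Q(v_k,v_l) = δ_{kl} q_k` is positive definite (`Q(f,f)` is real and `> 0` for `f ≠ 0`)
and satisfies the invariance `Q(Uu, v) = Q(u, Dv)`. -/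
theorem qGamma_pos_rec_and_Qform_invariant (m : ℤ) (z z' : ℝ)
    (hz : (m : ℝ) < z ∧ z < m + 1) (hz' : (m : ℝ) < z' ∧ z' < m + 1) :
    (∀ a : ℤ, 0 < qGamma z z' a) ∧
    (∀ a : ℤ, (z + a + 1) * qGamma z z' (a + 1) = (z' + a + 1) * qGamma z z' a) ∧
    (∀ f : ℤ →₀ ℂ, f ≠ 0 → (Qform z z' f f).im = 0 ∧ 0 < (Qform z z' f f).re) ∧
    (∀ u v : ℤ →₀ ℂ, Qform z z' (Uop z u) v = Qform z z' u (Dop z' v)) := by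
  have hrec : ∀ a : ℤ, (z + a + 1) * qGamma z z' (a + 1) = (z' + a + 1) * qGamma z z' a :=
    fun a => mul_qGamma_add_one (add_intCast_add_one_ne_zero hz a)
      (add_intCast_add_one_ne_zero hz' a)
  exact ⟨qGamma_pos hz hz', hrec,
    fun f hf => ⟨Qform_self_im f, Qform_self_re_pos (fun a _ => qGamma_pos hz hz' a) hf⟩,
    Qform_Uop_eq_Qform_Dop hrec⟩

end
end
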